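/- arXiv:2103.06040 — 2 statements merged into one kernel-verified Lean document; each statement's English description precedes it below -/
import Mathlib

section
/- If there exists a set C ⊆ X^d_ℓ of size k with φ(P,C) ≤ Δ, then there exist k pairs of indices (i_1,j_1),…,(i_k,j_k) with 1 ≤ i_s < j_s ≤ m such that the set C' = {μ(i_1,j_1),…,μ(i_k,j_k)} ⊆ X^d_ℓ satisfies φ(P,C') ≤ 3Δ. In other words, restricting the candidate cluster centers to the simplifications μ(i,j) of subcurves between breakpoints loses at most a factor 3 in the clustering cost, with no increase in the number of centers. -/
/-!
Each center `Cc s` that serves some subcurve `P[t_i,t_j]` of the given cover is replaced by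
`μ(i,j)` for one such pair `(i,j)`; the cover itself is kept. As `Cc s` witnesses that `P[t_i,t_j]`
has a simplification within `Δ`, also `d_F(μ(i,j), P[t_i,t_j]) ≤ Δ`. Any other subcurve `P[t_a,t_b]`
served by `Cc s` then satisfies
`d_F(P[t_a,t_b], μ(i,j)) ≤ d_F(P[t_a,t_b], Cc s) + d_F(Cc s, P[t_i,t_j]) + d_F(P[t_i,t_j], μ(i,j))`,
which is at most `3Δ`.
-/

open Set

noncomputable section

/-- Points in `ℝ^d`. -/
abbrev Pt (d : ℕ) : Type := EuclideanSpace ℝ (Fin d)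

/-- A reparametrization: a continuous strictly increasing bijection of `[0,1]` onto itself. -/
def IsReparam (γ : ℝ → ℝ) : Prop :=
  ContinuousOn γ (Icc 0 1) ∧ StrictMonoOn γ (Icc 0 1) ∧ γ '' Icc 0 1 = Icc 0 1

/-- The Fréchet distance `d_F(P,Q) = inf_γ sup_{t ∈ [0,1]} ‖P(γ(t)) - Q(t)‖`
(only the values of the curves on `[0,1]` are relevant). -/
def frechetDist {d : ℕ} (P Q : ℝ → Pt d) : ℝ :=
  ⨅ γ : {γ : ℝ → ℝ // IsReparam γ}, ⨆ s : Icc (0:ℝ) 1, ‖P (γ.1 s.1) - Q s.1‖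

/-- The linearly parametrized line segment from `a` to `b`. -/
def seg {d : ℕ} (a b : Pt d) : ℝ → Pt d := fun s => (1 - s) • a + s • b

/-- The subcurve `P[a,b]` of `P`, linearly reparametrized over `[0,1]`. -/
def subcurve {d : ℕ} (P : ℝ → Pt d) (a b : ℝ) : ℝ → Pt d := fun s => P (a + s * (b - a))

/-- The polygonal curve with vertex sequence `pts 0, …, pts n`, uniformly
parametrized over `[0,1]`. -/
def polyline {d n : ℕ} (pts : Fin (n + 1) → Pt d) : ℝ → Pt d := fun s =>
  if h : n = 0 then pts 0
  else
    let i : ℕ := min ⌊s * n⌋₊ (n - 1)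
    have hi : i < n := lt_of_le_of_lt (min_le_right _ _) (by omega)
    (1 - (s * n - i)) • pts ⟨i, hi.trans n.lt_succ_self⟩ +
      (s * n - i) • pts ⟨i + 1, Nat.succ_lt_succ hi⟩

/-- `f ∈ 𝕏^d_ℓ`: `f` is a polygonal curve with at most `ℓ` vertices. -/
def IsPolygonal {d : ℕ} (f : ℝ → Pt d) (ℓ : ℕ) : Prop :=
  ∃ n : ℕ, n + 1 ≤ ℓ ∧ ∃ pts : Fin (n + 1) → Pt d, f = polyline pts

/-- Concatenation of two curves (each parametrized over `[0,1]`). -/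
def concat {d : ℕ} (f g : ℝ → Pt d) : ℝ → Pt d := fun s =>
  if s ≤ 1 / 2 then f (2 * s) else g (2 * s - 1)

/-- `CostLE P m t C Δ` states that the clustering cost satisfies `φ(P,C) ≤ Δ`:
there is a family `I` of index pairs `(i,j)`, `1 ≤ i < j ≤ m`, with
`⋃_{(i,j) ∈ I} [t i, t j] = [0,1]`, such that every corresponding subcurve is
within Fréchet distance `Δ` of some center in `C`. -/
def CostLE {d : ℕ} (P : ℝ → Pt d) (m : ℕ) (t : ℕ → ℝ) (C : Set (ℝ → Pt d)) (Δ : ℝ) : Prop :=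
  ∃ I : Set (ℕ × ℕ),
    (∀ q ∈ I, 1 ≤ q.1 ∧ q.1 < q.2 ∧ q.2 ≤ m) ∧
    (⋃ q ∈ I, Icc (t q.1) (t q.2)) = Icc (0:ℝ) 1 ∧
    ∀ q ∈ I, ∃ c ∈ C, frechetDist (subcurve P (t q.1) (t q.2)) c ≤ Δ

/-- The set `r_Q` of the set system `R` (ground set `{1,…,m−1}`):
`r_Q = {z : ∃ i ≤ z < j, d_F(Q, P[t_i,t_j]) ≤ Δ}`. -/
def rSet {d : ℕ} (P : ℝ → Pt d) (m : ℕ) (t : ℕ → ℝ) (Δ : ℝ) (Q : ℝ → Pt d) : Set ℕ :=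
  {z | 1 ≤ z ∧ z < m ∧ ∃ i j, 1 ≤ i ∧ i ≤ z ∧ z < j ∧ j ≤ m ∧
    frechetDist Q (subcurve P (t i) (t j)) ≤ Δ}

/-- The order automorphism of `[0,1]` induced by a reparametrization. Order automorphisms are
automatically continuous, and their inverses and compositions yield the symmetry and the triangle
inequality of the Fréchet distance. -/
def IsReparam.toOrderIso {γ : ℝ → ℝ} (h : IsReparam γ) : Icc (0 : ℝ) 1 ≃o Icc (0 : ℝ) 1 :=
  (h.2.1.orderIso γ (Icc 0 1)).trans (OrderIso.setCongr _ _ h.2.2)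

lemma isReparam_IccExtend (e : Icc (0 : ℝ) 1 ≃o Icc (0 : ℝ) 1) :
    IsReparam (IccExtend zero_le_one fun s => (e s : ℝ)) := by
  refine ⟨(continuous_subtype_val.comp e.continuous).Icc_extend'.continuousOn,
    StrictMono.strictMonoOn_IccExtend _ fun _ _ h => e.strictMono h, ?_⟩
  rw [image_eq_range]
  simp only [IccExtend_val]
  exact (e.surjective.range_comp Subtype.val).trans Subtype.range_coe

lemma IsReparam.toOrderIso_surjective :
    Function.Surjective fun γ : {γ : ℝ → ℝ // IsReparam γ} => γ.2.toOrderIso := fun e =>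
  ⟨⟨_, isReparam_IccExtend e⟩, OrderIso.ext <| funext fun s =>
    Subtype.ext <| IccExtend_val zero_le_one (fun s => (e s : ℝ)) s⟩

lemma bddAbove_range_dist_comp {α X : Type*} [PseudoMetricSpace X] {S : Set α} {f g : α → X}
    (hf : Bornology.IsBounded (f '' S)) (hg : Bornology.IsBounded (g '' S)) (e : S → S) :
    BddAbove (range fun s : S => dist (f (e s)) (g s)) := by
  obtain ⟨B, hB⟩ := Metric.isBounded_iff.1 (hf.union hg)
  exact ⟨B, forall_mem_range.2 fun s =>
    hB (.inl (mem_image_of_mem f (e s).2)) (.inr (mem_image_of_mem g s.2))⟩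

section FrechetDist

variable {d : ℕ} {f g h k : ℝ → Pt d}

lemma frechetDist_eq_iInf_orderIso (f g : ℝ → Pt d) :
    frechetDist f g =
      ⨅ e : Icc (0 : ℝ) 1 ≃o Icc (0 : ℝ) 1, ⨆ s : Icc (0 : ℝ) 1, dist (f (e s)) (g s) :=
  IsReparam.toOrderIso_surjective.iInf_congr _ fun γ =>
    iSup_congr fun s => dist_eq_norm (f (γ.1 s)) (g s)

lemma frechetDist_comm (f g : ℝ → Pt d) : frechetDist f g = frechetDist g f := by
  simp only [frechetDist_eq_iInf_orderIso]
  refine OrderIso.symm_bijective.surjective.iInf_congr _ fun e =>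
    e.symm.surjective.iSup_congr _ fun s => ?_
  rw [e.apply_symm_apply, dist_comm]

-- Pitfall: an unbounded real supremum is `0`, so `frechetDist` of unbounded curves may be junk.
lemma frechetDist_triangle (hf : Bornology.IsBounded (f '' Icc 0 1))
    (hg : Bornology.IsBounded (g '' Icc 0 1)) (hh : Bornology.IsBounded (h '' Icc 0 1)) :
    frechetDist f h ≤ frechetDist f g + frechetDist g h := by
  simp only [frechetDist_eq_iInf_orderIso]
  refine le_ciInf_add_ciInf fun e e' => ?_
  have hbdd : BddBelow (range fun e : Icc (0 : ℝ) 1 ≃o Icc (0 : ℝ) 1 =>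
      ⨆ s : Icc (0 : ℝ) 1, dist (f (e s)) (h s)) :=
    ⟨0, forall_mem_range.2 fun _ => Real.iSup_nonneg fun _ => dist_nonneg⟩
  refine ciInf_le_of_le hbdd (e'.trans e) (ciSup_le fun s => ?_)
  calc dist (f (e (e' s))) (h s)
      ≤ dist (f (e (e' s))) (g (e' s)) + dist (g (e' s)) (h s) := dist_triangle _ _ _
    _ ≤ _ := add_le_add (le_ciSup (bddAbove_range_dist_comp hf hg e) (e' s))
        (le_ciSup (bddAbove_range_dist_comp hg hh e') s)

lemma frechetDist_triangle4 (hf : Bornology.IsBounded (f '' Icc 0 1))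
    (hg : Bornology.IsBounded (g '' Icc 0 1)) (hh : Bornology.IsBounded (h '' Icc 0 1))
    (hk : Bornology.IsBounded (k '' Icc 0 1)) :
    frechetDist f k ≤ frechetDist f g + frechetDist g h + frechetDist h k :=
  (frechetDist_triangle hf hh hk).trans (by gcongr; exact frechetDist_triangle hf hg hh)

end FrechetDist

lemma sub_min_floor_mem_Icc {R : Type*} [Ring R] [LinearOrder R] [IsStrictOrderedRing R]
    [FloorSemiring R] {n : ℕ} (hn : n ≠ 0) {x : R} (hx : x ∈ Icc (0 : R) n) :
    x - (min ⌊x⌋₊ (n - 1) : ℕ) ∈ Icc (0 : R) 1 := by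
  have hle : ((min ⌊x⌋₊ (n - 1) : ℕ) : R) ≤ x :=
    (Nat.cast_le.2 (min_le_left _ _)).trans (Nat.floor_le hx.1)
  refine ⟨sub_nonneg.2 hle, sub_le_iff_le_add'.2 ?_⟩
  rcases min_choice ⌊x⌋₊ (n - 1) with h | h <;> rw [h]
  · exact (Nat.lt_floor_add_one x).le
  · exact_mod_cast hx.2.trans_eq (congrArg _ (Nat.sub_add_cancel (Nat.pos_of_ne_zero hn)).symm)

lemma polyline_mem_convexHull {d n : ℕ} (pts : Fin (n + 1) → Pt d) {s : ℝ}
    (hs : s ∈ Icc (0 : ℝ) 1) : polyline pts s ∈ convexHull ℝ (range pts) := by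
  have hpts : ∀ i, pts i ∈ convexHull ℝ (range pts) := fun i =>
    subset_convexHull ℝ _ (mem_range_self i)
  unfold polyline
  split_ifs with hn
  · exact hpts 0
  · have hsn : s * n ∈ Icc (0 : ℝ) n :=
      ⟨mul_nonneg hs.1 n.cast_nonneg, mul_le_of_le_one_left n.cast_nonneg hs.2⟩
    obtain ⟨h0, h1⟩ := sub_min_floor_mem_Icc hn hsn
    exact convex_convexHull ℝ _ (hpts _) (hpts _) (sub_nonneg.2 h1) h0 (sub_add_cancel _ _)

lemma IsPolygonal.isBounded_image_Icc {d ℓ : ℕ} {f : ℝ → Pt d} (hf : IsPolygonal f ℓ) :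
    Bornology.IsBounded (f '' Icc 0 1) := by
  obtain ⟨n, -, pts, rfl⟩ := hf
  exact (isBounded_convexHull.2 (finite_range pts).isBounded).subset
    (image_subset_iff.2 fun _ hs => polyline_mem_convexHull pts hs)

lemma subcurve_image_Icc_subset {d : ℕ} (P : ℝ → Pt d) {S : Set ℝ} (hS : Convex ℝ S) {a b : ℝ}
    (ha : a ∈ S) (hb : b ∈ S) : subcurve P a b '' Icc 0 1 ⊆ P '' S :=
  image_subset_iff.2 fun _ hs => mem_image_of_mem P (hS.add_smul_sub_mem ha hb hs)

lemma mapsTo_Icc_of_le_add_one {α : Type*} [Preorder α] {t : ℕ → α} {a b : ℕ}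
    (ht : ∀ i, a ≤ i → i < b → t i ≤ t (i + 1)) : MapsTo t (Icc a b) (Icc (t a) (t b)) :=
  (monotoneOn_of_le_add_one ordConnected_Icc fun i _ hi hi' => ht i hi.1 hi'.2).mapsTo_Icc

lemma exists_mem_forall_mem_imp {α : Type*} {I : Set α} (hI : I.Nonempty) (p : α → Prop) :
    ∃ a ∈ I, ∀ b ∈ I, p b → p a := by
  by_cases h : ∃ a ∈ I, p a
  · obtain ⟨a, ha, hpa⟩ := h
    exact ⟨a, ha, fun _ _ _ => hpa⟩
  · obtain ⟨a, ha⟩ := hI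
    exact ⟨a, ha, fun b hb hpb => (h ⟨b, hb, hpb⟩).elim⟩

theorem stmt5_general {d m : ℕ} {P : ℝ → Pt d} (hP : Bornology.IsBounded (P '' Icc 0 1))
    {t : ℕ → ℝ} (ht : MapsTo t (Icc 1 m) (Icc 0 1)) {Δ : ℝ} {X : Set (ℝ → Pt d)}
    (hX : ∀ f ∈ X, Bornology.IsBounded (f '' Icc 0 1)) {μ : ℕ → ℕ → ℝ → Pt d}
    (hμX : ∀ i j, 1 ≤ i → i < j → j ≤ m → μ i j ∈ X)
    (hμ : ∀ i j, 1 ≤ i → i < j → j ≤ m →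
      (∃ Q, Q ∈ X ∧ frechetDist Q (subcurve P (t i) (t j)) ≤ Δ) →
      frechetDist (μ i j) (subcurve P (t i) (t j)) ≤ Δ)
    {ι : Type*} {C : ι → ℝ → Pt d} (hCX : ∀ s, C s ∈ X)
    (hcost : CostLE P m t {f | ∃ s, f = C s} Δ) :
    ∃ ij : ι → ℕ × ℕ,
      (∀ s, 1 ≤ (ij s).1 ∧ (ij s).1 < (ij s).2 ∧ (ij s).2 ≤ m) ∧
      CostLE P m t {f | ∃ s, f = μ (ij s).1 (ij s).2} (3 * Δ) := by
  obtain ⟨I, hI, hcover, hserved⟩ := hcost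
  have hPbdd : ∀ q ∈ I, Bornology.IsBounded (subcurve P (t q.1) (t q.2) '' Icc 0 1) := by
    intro q hq
    obtain ⟨h1, h2, h3⟩ := hI q hq
    exact hP.subset (subcurve_image_Icc_subset P (convex_Icc 0 1)
      (ht ⟨h1, h2.le.trans h3⟩) (ht ⟨h1.trans h2.le, h3⟩))
  obtain ⟨q₀, hq₀, -⟩ := nonempty_biUnion.1 (hcover ▸ nonempty_Icc.2 zero_le_one)
  choose ij hijI hij using fun s => exists_mem_forall_mem_imp ⟨q₀, hq₀⟩
    fun q => frechetDist (subcurve P (t q.1) (t q.2)) (C s) ≤ Δ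
  refine ⟨ij, fun s => hI _ (hijI s), I, hI, hcover, fun q hq => ?_⟩
  obtain ⟨_, ⟨s, rfl⟩, hqC⟩ := hserved q hq
  obtain ⟨h1, h2, h3⟩ := hI _ (hijI s)
  have hCp : frechetDist (C s) (subcurve P (t (ij s).1) (t (ij s).2)) ≤ Δ :=
    (frechetDist_comm _ _).trans_le (hij s q hq hqC)
  have hpμ : frechetDist (subcurve P (t (ij s).1) (t (ij s).2)) (μ (ij s).1 (ij s).2) ≤ Δ :=
    (frechetDist_comm _ _).trans_le (hμ _ _ h1 h2 h3 ⟨C s, hCX s, hCp⟩)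
  have htri := frechetDist_triangle4 (hPbdd q hq) (hX _ (hCX s)) (hPbdd _ (hijI s))
    (hX _ (hμX _ _ h1 h2 h3))
  exact ⟨_, ⟨s, rfl⟩, by linarith⟩

/-- Restricting cluster centers to the simplifications `μ(i,j)` of
subcurves between breakpoints loses at most a factor `3` in the clustering cost,
with no increase in the number of centers. -/
theorem stmt5 {d ℓ : ℕ} (P : ℝ → Pt d) (hP : ContinuousOn P (Icc 0 1))
    (m : ℕ) (hm : 2 ≤ m) (t : ℕ → ℝ) (ht0 : t 1 = 0) (ht1 : t m = 1)
    (htmono : ∀ i, 1 ≤ i → i < m → t i < t (i + 1))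
    (Δ : ℝ) (hΔ : 0 < Δ) (μ : ℕ → ℕ → ℝ → Pt d)
    (hμpoly : ∀ i j, 1 ≤ i → i < j → j ≤ m → IsPolygonal (μ i j) ℓ)
    (hμ : ∀ i j, 1 ≤ i → i < j → j ≤ m →
      (∃ Q, IsPolygonal Q ℓ ∧ frechetDist Q (subcurve P (t i) (t j)) ≤ Δ) →
      frechetDist (μ i j) (subcurve P (t i) (t j)) ≤ Δ)
    (k : ℕ) (Cc : Fin k → ℝ → Pt d)
    (hCpoly : ∀ s, IsPolygonal (Cc s) ℓ)
    (hCcost : CostLE P m t {f | ∃ s, f = Cc s} Δ) :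
    ∃ ij : Fin k → ℕ × ℕ,
      (∀ s, 1 ≤ (ij s).1 ∧ (ij s).1 < (ij s).2 ∧ (ij s).2 ≤ m) ∧
      CostLE P m t {f | ∃ s, f = μ (ij s).1 (ij s).2} (3 * Δ) :=
  stmt5_general (isCompact_Icc.image_of_continuousOn hP).isBounded
    (by simpa only [ht0, ht1] using mapsTo_Icc_of_le_add_one fun i hi him => (htmono i hi him).le)
    (X := {f | IsPolygonal f ℓ}) (fun _ hf => hf.isBounded_image_Icc) hμpoly hμ hCpoly hCcost
end
end

section
/- Properties of the scan indices: for every z ∈ {1,…,m−1}, (i) for all x ∈ [x_z, z], d_F(τ_{x,z}, P[t_x, t_z]) ≤ 4Δ, and for all y ∈ [z+1, y_z], d_F(τ_{z+1,y}, P[t_{z+1}, t_y]) ≤ 4Δ; (ii) for all x with 1 ≤ x < x_z, d_F(τ_{x,z}, P[t_x, t_z]) > 2Δ, and for all y with y_z < y ≤ m, d_F(τ_{z+1,y}, P[t_{z+1}, t_y]) > 2Δ. -/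
/-!
If some segment is within Fréchet distance `r` of a curve, then the segment joining the endpoints of
any subcurve is within `2r` of that subcurve. Indeed, a near-optimal matching sends the subcurve to
a subsegment `σ` of the given segment, at distance about `r`. The endpoints of `σ` are then at
distance about `r` from those of the subcurve, so by convexity `σ` and the new segment, both
parametrized linearly, are at distance about `r`, and the triangle inequality gives `2r`.

Consequently, if `d_F(τ_{x,z}, P[t_x,t_z]) ≤ 2Δ` for some `x < x_z`, then the bound `4Δ` holds for
all `x' ∈ [x,z]`, which contradicts the minimality of `x_z`; the case of `y_z` is symmetric.
-/

open Set

noncomputable section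

namespace IsReparam

theorem of_endpoints {γ : ℝ → ℝ} (hcont : ContinuousOn γ (Icc 0 1))
    (hmono : StrictMonoOn γ (Icc 0 1)) (h0 : γ 0 = 0) (h1 : γ 1 = 1) : IsReparam γ := by
  refine ⟨hcont, hmono, Subset.antisymm ?_ ?_⟩
  · simpa only [h0, h1] using hmono.monotoneOn.image_Icc_subset
  · simpa only [h0, h1] using intermediate_value_Icc zero_le_one hcont

theorem id : IsReparam id := of_endpoints continuousOn_id strictMonoOn_id rfl rfl

theorem mapsTo {γ : ℝ → ℝ} (hγ : IsReparam γ) : MapsTo γ (Icc 0 1) (Icc 0 1) :=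
  mapsTo_iff_image_subset.2 hγ.2.2.subset

theorem exists_restrict {γ : ℝ → ℝ} (hγ : IsReparam γ) {a b : ℝ} (ha : 0 ≤ a) (hab : a ≤ b)
    (hb : b ≤ 1) :
    ∃ δ, IsReparam δ ∧ ∀ u, γ (a + u * (b - a)) = γ a + δ u * (γ b - γ a) := by
  rcases hab.eq_or_lt with rfl | hlt
  · exact ⟨_, IsReparam.id, by simp⟩
  have ha01 : a ∈ Icc (0 : ℝ) 1 := ⟨ha, hab.trans hb⟩
  have hb01 : b ∈ Icc (0 : ℝ) 1 := ⟨ha.trans hab, hb⟩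
  have hmaps : MapsTo (fun u ↦ a + u * (b - a)) (Icc 0 1) (Icc 0 1) :=
    fun u hu ↦ (convex_Icc 0 1).add_smul_sub_mem ha01 hb01 hu
  have hpos : 0 < γ b - γ a := sub_pos.2 (hγ.2.1 ha01 hb01 hlt)
  refine ⟨fun u ↦ (γ (a + u * (b - a)) - γ a) / (γ b - γ a), of_endpoints ?_ ?_ ?_ ?_, ?_⟩
  · exact ((hγ.1.comp (by fun_prop) hmaps).sub continuousOn_const).div_const _
  · intro u hu v hv huv
    have hγuv : γ (a + u * (b - a)) < γ (a + v * (b - a)) :=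
      hγ.2.1 (hmaps hu) (hmaps hv) (by nlinarith)
    dsimp only
    gcongr
  · simp
  · simp [hpos.ne']
  · intro u
    field_simp
    ring

end IsReparam

section Matching

variable {d : ℕ} {P Q : ℝ → Pt d} {R : ℝ}

theorem frechetDist_le_of_isReparam {γ : ℝ → ℝ} (hγ : IsReparam γ)
    (h : ∀ s ∈ Icc (0 : ℝ) 1, ‖P (γ s) - Q s‖ ≤ R) : frechetDist P Q ≤ R := by
  have hbdd : BddBelow (range fun γ : {γ : ℝ → ℝ // IsReparam γ} ↦
      ⨆ s : Icc (0 : ℝ) 1, ‖P (γ.1 s.1) - Q s.1‖) :=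
    ⟨0, forall_mem_range.2 fun _ ↦ Real.iSup_nonneg fun _ ↦ norm_nonneg _⟩
  exact (ciInf_le hbdd ⟨γ, hγ⟩).trans (ciSup_le fun s ↦ h s.1 s.2)

/- Boundedness is what makes the real-valued supremum in `frechetDist` an upper bound: `⨆` of an
unbounded family is `0`. -/
theorem exists_isReparam_of_frechetDist_lt (hP : Bornology.IsBounded (P '' Icc 0 1))
    (hQ : Bornology.IsBounded (Q '' Icc 0 1)) (h : frechetDist P Q < R) :
    ∃ γ, IsReparam γ ∧ ∀ s ∈ Icc (0 : ℝ) 1, ‖P (γ s) - Q s‖ ≤ R := by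
  have : Nonempty {γ : ℝ → ℝ // IsReparam γ} := ⟨⟨_, IsReparam.id⟩⟩
  obtain ⟨⟨γ, hγ⟩, hlt⟩ := exists_lt_of_ciInf_lt h
  obtain ⟨A, hA⟩ := hP.exists_norm_le
  obtain ⟨B, hB⟩ := hQ.exists_norm_le
  have hbdd : BddAbove (range fun s : Icc (0 : ℝ) 1 ↦ ‖P (γ s.1) - Q s.1‖) :=
    ⟨A + B, forall_mem_range.2 fun s ↦ norm_sub_le_of_le
      (hA _ (mem_image_of_mem P (hγ.mapsTo s.2))) (hB _ (mem_image_of_mem Q s.2))⟩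
  exact ⟨γ, hγ, fun s hs ↦ (le_ciSup hbdd ⟨s, hs⟩).trans hlt.le⟩

end Matching

section Segment

variable {d : ℕ}

theorem continuous_seg (p q : Pt d) : Continuous (seg p q) := by
  unfold seg
  fun_prop

theorem subcurve_seg (p q : Pt d) (a b : ℝ) :
    subcurve (seg p q) a b = seg (seg p q a) (seg p q b) := by
  ext1 s
  simp only [subcurve, seg]
  module

theorem subcurve_subcurve (P : ℝ → Pt d) (a b u v : ℝ) :
    subcurve (subcurve P a b) u v = subcurve P (a + u * (b - a)) (a + v * (b - a)) := by
  ext1 s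
  simp only [subcurve]
  ring_nf

theorem image_subcurve_Icc (P : ℝ → Pt d) (a b : ℝ) :
    subcurve P a b '' Icc 0 1 = P '' segment ℝ a b := by
  rw [segment_eq_image', image_image]
  rfl

theorem norm_seg_sub_seg_le {p q p' q' : Pt d} {R s : ℝ} (hp : ‖p - p'‖ ≤ R) (hq : ‖q - q'‖ ≤ R)
    (hs : s ∈ Icc (0 : ℝ) 1) : ‖seg p q s - seg p' q' s‖ ≤ R := by
  have hconv := convex_closedBall (0 : Pt d) R (mem_closedBall_zero_iff.2 hp)
    (mem_closedBall_zero_iff.2 hq) (sub_nonneg.2 hs.2) hs.1 (sub_add_cancel 1 s)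
  have hsub : seg p q s - seg p' q' s = (1 - s) • (p - p') + s • (q - q') := by
    simp only [seg]
    module
  rw [hsub]
  exact mem_closedBall_zero_iff.1 hconv

end Segment

section Shortcut

variable {d : ℕ}

/-- The Fréchet distance between the subcurve `P[a,b]` and the segment joining its endpoints, which
for `a = t_i` and `b = t_j` is `d_F(τ_{i,j}, P[t_i,t_j])`. -/
def shortcutDist (P : ℝ → Pt d) (a b : ℝ) : ℝ :=
  frechetDist (seg (P a) (P b)) (subcurve P a b)

theorem shortcutDist_le_two_mul_frechetDist_seg {Q : ℝ → Pt d}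
    (hQ : Bornology.IsBounded (Q '' Icc 0 1)) (p q : Pt d) {a b : ℝ} (ha : 0 ≤ a) (hab : a ≤ b)
    (hb : b ≤ 1) : shortcutDist Q a b ≤ 2 * frechetDist (seg p q) Q := by
  refine le_of_forall_gt_imp_ge_of_dense fun R hR ↦ ?_
  have hlt : frechetDist (seg p q) Q < R / 2 := by linarith
  have hseg : Bornology.IsBounded (seg p q '' Icc 0 1) :=
    (isCompact_Icc.image (continuous_seg p q)).isBounded
  obtain ⟨γ, hγ, hclose⟩ := exists_isReparam_of_frechetDist_lt hseg hQ hlt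
  obtain ⟨δ, hδ, hrestrict⟩ := hγ.exists_restrict ha hab hb
  refine frechetDist_le_of_isReparam hδ fun u hu ↦ ?_
  have ha01 : a ∈ Icc (0 : ℝ) 1 := ⟨ha, hab.trans hb⟩
  have hb01 : b ∈ Icc (0 : ℝ) 1 := ⟨ha.trans hab, hb⟩
  have hu01 : a + u * (b - a) ∈ Icc (0 : ℝ) 1 :=
    (convex_Icc 0 1).add_smul_sub_mem ha01 hb01 hu
  let σ := seg (seg p q (γ a)) (seg p q (γ b))
  have hσ : σ (δ u) = seg p q (γ (a + u * (b - a))) := by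
    rw [hrestrict]
    exact (congrFun (subcurve_seg p q (γ a) (γ b)) (δ u)).symm
  have hnew : ‖seg (Q a) (Q b) (δ u) - σ (δ u)‖ ≤ R / 2 := by
    rw [norm_sub_rev]
    exact norm_seg_sub_seg_le (hclose a ha01) (hclose b hb01) (hδ.mapsTo hu)
  have hold : ‖σ (δ u) - subcurve Q a b u‖ ≤ R / 2 := hσ ▸ hclose _ hu01
  calc ‖seg (Q a) (Q b) (δ u) - subcurve Q a b u‖
      ≤ ‖seg (Q a) (Q b) (δ u) - σ (δ u)‖ + ‖σ (δ u) - subcurve Q a b u‖ :=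
        norm_sub_le_norm_sub_add_norm_sub _ _ _
    _ ≤ R / 2 + R / 2 := add_le_add hnew hold
    _ = R := add_halves R

theorem shortcutDist_subcurve (P : ℝ → Pt d) (a b u v : ℝ) :
    shortcutDist (subcurve P a b) u v =
      shortcutDist P (a + u * (b - a)) (a + v * (b - a)) := by
  rw [shortcutDist, subcurve_subcurve]
  rfl

theorem shortcutDist_le_two_mul {P : ℝ → Pt d} {a b a' b' : ℝ}
    (hP : Bornology.IsBounded (P '' Icc a b)) (haa' : a ≤ a') (hab' : a' ≤ b') (hbb' : b' ≤ b) :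
    shortcutDist P a' b' ≤ 2 * shortcutDist P a b := by
  have hab : a ≤ b := haa'.trans (hab'.trans hbb')
  have hQ : Bornology.IsBounded (subcurve P a b '' Icc 0 1) := by
    rwa [image_subcurve_Icc, segment_eq_Icc hab]
  -- If `a = b`, both quotients are `0 / 0 = 0`, which still represents `a' = b' = a`.
  have ha' : a + (a' - a) / (b - a) * (b - a) = a' := by
    rw [div_mul_cancel_of_imp fun _ ↦ by linarith, add_sub_cancel]
  have hb' : a + (b' - a) / (b - a) * (b - a) = b' := by
    rw [div_mul_cancel_of_imp fun _ ↦ by linarith, add_sub_cancel]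
  calc shortcutDist P a' b'
      = shortcutDist (subcurve P a b) ((a' - a) / (b - a)) ((b' - a) / (b - a)) := by
        rw [shortcutDist_subcurve, ha', hb']
    _ ≤ 2 * shortcutDist P a b := by
        have hlen : 0 ≤ b - a := sub_nonneg.2 hab
        exact shortcutDist_le_two_mul_frechetDist_seg hQ (P a) (P b)
          (div_nonneg (sub_nonneg.2 haa') hlen) (by gcongr)
          (div_le_one_of_le₀ (by gcongr) hlen)

end Shortcut

section Scan

variable {d : ℕ} {ι : Type*} [Preorder ι] {P : ℝ → Pt d} {t : ι → ℝ} {i j : ι} {r : ℝ}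

theorem lt_two_mul_shortcutDist_of_lt_isLeast (ht : MonotoneOn t (Icc i j))
    (hP : Bornology.IsBounded (P '' Icc (t i) (t j))) {x₀ x : ι}
    (hx₀ : IsLeast {x | i ≤ x ∧ x ≤ j ∧
      ∀ x', x ≤ x' → x' ≤ j → shortcutDist P (t x') (t j) ≤ r} x₀)
    (hix : i ≤ x) (hx : x < x₀) : r < 2 * shortcutDist P (t x) (t j) := by
  by_contra! hle
  have hxj : x ≤ j := hx.le.trans hx₀.1.2.1
  have hmem_j : j ∈ Icc i j := ⟨hix.trans hxj, le_rfl⟩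
  refine hx.not_ge (hx₀.2 ⟨hix, hxj, fun x' hxx' hx'j ↦ le_trans ?_ hle⟩)
  have hmem_x' : x' ∈ Icc i j := ⟨hix.trans hxx', hx'j⟩
  have hix_t : t i ≤ t x := ht ⟨le_rfl, hmem_j.1⟩ ⟨hix, hxj⟩ hix
  exact shortcutDist_le_two_mul (hP.subset (image_mono (Icc_subset_Icc_left hix_t)))
    (ht ⟨hix, hxj⟩ hmem_x' hxx') (ht hmem_x' hmem_j hx'j) le_rfl

theorem lt_two_mul_shortcutDist_of_isGreatest_lt (ht : MonotoneOn t (Icc i j))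
    (hP : Bornology.IsBounded (P '' Icc (t i) (t j))) {y₀ y : ι}
    (hy₀ : IsGreatest {y | i ≤ y ∧ y ≤ j ∧
      ∀ y', i ≤ y' → y' ≤ y → shortcutDist P (t i) (t y') ≤ r} y₀)
    (hy : y₀ < y) (hyj : y ≤ j) : r < 2 * shortcutDist P (t i) (t y) := by
  by_contra! hle
  have hiy : i ≤ y := hy₀.1.1.trans hy.le
  have hmem_i : i ∈ Icc i j := ⟨le_rfl, hiy.trans hyj⟩
  refine hy.not_ge (hy₀.2 ⟨hiy, hyj, fun y' hiy' hy'y ↦ le_trans ?_ hle⟩)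
  have hmem_y' : y' ∈ Icc i j := ⟨hiy', hy'y.trans hyj⟩
  have hyj_t : t y ≤ t j := ht ⟨hiy, hyj⟩ ⟨hmem_i.2, le_rfl⟩ hyj
  exact shortcutDist_le_two_mul (hP.subset (image_mono (Icc_subset_Icc_right hyj_t)))
    le_rfl (ht hmem_i hmem_y' hiy') (ht hmem_y' ⟨hiy, hyj⟩ hy'y)

end Scan

theorem stmt7_general {d : ℕ} {P : ℝ → Pt d} {m : ℕ} {t : ℕ → ℝ} (ht : MonotoneOn t (Icc 1 m))
    (hP : Bornology.IsBounded (P '' Icc (t 1) (t m))) {Δ : ℝ} {z xz yz : ℕ}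
    (hxz : IsLeast {x | 1 ≤ x ∧ x ≤ z ∧
      ∀ x', x ≤ x' → x' ≤ z → shortcutDist P (t x') (t z) ≤ 4 * Δ} xz)
    (hyz : IsGreatest {y | z + 1 ≤ y ∧ y ≤ m ∧
      ∀ y', z + 1 ≤ y' → y' ≤ y → shortcutDist P (t (z + 1)) (t y') ≤ 4 * Δ} yz) :
    (∀ x, xz ≤ x → x ≤ z → shortcutDist P (t x) (t z) ≤ 4 * Δ) ∧
    (∀ y, z + 1 ≤ y → y ≤ yz → shortcutDist P (t (z + 1)) (t y) ≤ 4 * Δ) ∧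
    (∀ x, 1 ≤ x → x < xz → 2 * Δ < shortcutDist P (t x) (t z)) ∧
    (∀ y, yz < y → y ≤ m → 2 * Δ < shortcutDist P (t (z + 1)) (t y)) := by
  have hz : 1 ≤ z := hxz.1.1.trans hxz.1.2.1
  have hzm : z + 1 ≤ m := hyz.1.1.trans hyz.1.2.1
  have hz_mem : z ∈ Icc 1 m := ⟨hz, by lia⟩
  have hz1_mem : z + 1 ∈ Icc 1 m := ⟨by lia, hzm⟩
  have htz : t z ≤ t m := ht hz_mem ⟨by lia, le_rfl⟩ hz_mem.2
  have htz1 : t 1 ≤ t (z + 1) := ht ⟨le_rfl, by lia⟩ hz1_mem hz1_mem.1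
  refine ⟨hxz.1.2.2, hyz.1.2.2, fun x hx hxlt ↦ ?_, fun y hylt hy ↦ ?_⟩
  · have := lt_two_mul_shortcutDist_of_lt_isLeast (ht.mono (Icc_subset_Icc_right hz_mem.2))
      (hP.subset (image_mono (Icc_subset_Icc_right htz))) hxz hx hxlt
    linarith
  · have := lt_two_mul_shortcutDist_of_isGreatest_lt (ht.mono (Icc_subset_Icc_left hz1_mem.1))
      (hP.subset (image_mono (Icc_subset_Icc_left htz1))) hyz hylt hy
    linarith

/-- Properties of the scan indices `x_z` and `y_z`. -/
theorem stmt7 {d : ℕ} (P : ℝ → Pt d) (hP : ContinuousOn P (Icc 0 1))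
    (m : ℕ) (hm : 2 ≤ m) (t : ℕ → ℝ) (ht0 : t 1 = 0) (ht1 : t m = 1)
    (htmono : ∀ i, 1 ≤ i → i < m → t i < t (i + 1))
    (Δ : ℝ) (hΔ : 0 < Δ)
    (z : ℕ) (hz1 : 1 ≤ z) (hz2 : z < m) (xz yz : ℕ)
    (hxz : IsLeast {x | 1 ≤ x ∧ x ≤ z ∧ ∀ x', x ≤ x' → x' ≤ z →
      frechetDist (seg (P (t x')) (P (t z))) (subcurve P (t x') (t z)) ≤ 4 * Δ} xz)
    (hyz : IsGreatest {y | z + 1 ≤ y ∧ y ≤ m ∧ ∀ y', z + 1 ≤ y' → y' ≤ y →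
      frechetDist (seg (P (t (z+1))) (P (t y'))) (subcurve P (t (z+1)) (t y')) ≤ 4 * Δ} yz) :
    (∀ x, xz ≤ x → x ≤ z →
      frechetDist (seg (P (t x)) (P (t z))) (subcurve P (t x) (t z)) ≤ 4 * Δ) ∧
    (∀ y, z + 1 ≤ y → y ≤ yz →
      frechetDist (seg (P (t (z+1))) (P (t y))) (subcurve P (t (z+1)) (t y)) ≤ 4 * Δ) ∧
    (∀ x, 1 ≤ x → x < xz →
      2 * Δ < frechetDist (seg (P (t x)) (P (t z))) (subcurve P (t x) (t z))) ∧
    (∀ y, yz < y → y ≤ m →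
      2 * Δ < frechetDist (seg (P (t (z+1))) (P (t y))) (subcurve P (t (z+1)) (t y))) := by
  have ht : MonotoneOn t (Icc 1 m) :=
    monotoneOn_of_le_add_one ordConnected_Icc fun i _ hi hi' ↦ (htmono i hi.1 hi'.2).le
  have hbdd : Bornology.IsBounded (P '' Icc (t 1) (t m)) := by
    rw [ht0, ht1]
    exact (isCompact_Icc.image_of_continuousOn hP).isBounded
  exact stmt7_general ht hbdd hxz hyz
end
end
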